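/- Capturing views are not closed under union (second example of Section 6): Let α = {a₁, a₂} and β = {0, 1} (e.g., β = Bool with 0 = false, 1 = true). Let L_s = {[inl a₁, inl a₂]} (the single word a₁·a₂ over α ⊕ β) and L_t = {[0,0], [0,1], [1,0]}. Define views V₁ by V₁(a₁) = {[0]}, V₁(a₂) = {[0], [1]}, and V₂ by V₂(a₁) = {[0], [1]}, V₂(a₂) = {[0]}. Then: (i) V₁ maximally captures ⟨L_s, L_t⟩; (ii) V₂ maximally captures ⟨L_s, L_t⟩; and (iii) the pointwise union V, defined by V(a) = V₁(a) ∪ V₂(a) for each a ∈ α, does not capture ⟨L_s, L_t⟩, since [1,1] ∈ L_s[V] but [1,1] ∉ L_t. -/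

import Mathlib

/-!
Since `L_s` is the single word `a₁ a₂`, the language `L_s[V]` is the product `V(a₁) · V(a₂)`, and
capturing means that this product is nonempty and lies in `{00, 01, 10}`.

Any capturing `V'` above `V₁` has `0 ∈ V'(a₁)` and `0, 1 ∈ V'(a₂)`. A word `u ∈ V'(a₁)` therefore
satisfies `u0, u1 ∈ L_t`, forcing `u = 0`, and a word `v ∈ V'(a₂)` satisfies `0v ∈ L_t`, forcing
`v ∈ {0, 1}`; so `V' = V₁`. The argument for `V₂` is the mirror image. The union of the views has
`1` in both components and so produces `11 ∉ L_t`.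
-/

/-- The two-letter source alphabet of the example. -/
inductive SrcEx2 : Type
  | a1 | a2
deriving DecidableEq

/-- Substituted letter: a source letter is replaced by its view, a target letter by itself. -/
def viewHat {α β : Type*} (V : α → Language β) : α ⊕ β → Language β
  | Sum.inl a => V a
  | Sum.inr b => {[b]}

/-- Substitution `s[V]` of views into a word over the combined alphabet. -/
def subst {α β : Type*} (V : α → Language β) (s : List (α ⊕ β)) : Language β :=
  (s.map (viewHat V)).prod

/-- Substitution `L_s[V]` of views into a source language. -/
def langSubst {α β : Type*} (V : α → Language β) (Ls : Language (α ⊕ β)) : Language β :=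
  ⋃ s ∈ Ls, subst V s

/-- Views `V` capture the mapping `⟨L_s, L_t⟩`. -/
def Captures {α β : Type*} (V : α → Language β) (Ls : Language (α ⊕ β))
    (Lt : Language β) : Prop :=
  langSubst V Ls ≤ Lt ∧ langSubst V Ls ≠ 0

/-- Views `V` maximally capture the mapping `⟨L_s, L_t⟩`. -/
def MaximallyCaptures {α β : Type*} (V : α → Language β) (Ls : Language (α ⊕ β))
    (Lt : Language β) : Prop :=
  Captures V Ls Lt ∧
    ¬ ∃ V' : α → Language β, Captures V' Ls Lt ∧
      (∀ a : α, V a ≤ V' a) ∧ (∃ a : α, V a ≠ V' a)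

/-- The source language `a₁ · a₂` of the example (over `SrcEx2 ⊕ Bool`). -/
def LsEx2 : Language (SrcEx2 ⊕ Bool) := {[Sum.inl .a1, Sum.inl .a2]}

/-- The target language `00 + 01 + 10` of the example (`0 = false`, `1 = true`). -/
def LtEx2 : Language Bool := {[false, false], [false, true], [true, false]}

/-- The views `V₁(a₁) = 0`, `V₁(a₂) = 0 + 1`. -/
def V1Ex : SrcEx2 → Language Bool
  | .a1 => {[false]}
  | .a2 => {[false], [true]}

/-- The views `V₂(a₁) = 0 + 1`, `V₂(a₂) = 0`. -/
def V2Ex : SrcEx2 → Language Bool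
  | .a1 => {[false], [true]}
  | .a2 => {[false]}

theorem mem_langSubst_LsEx2 (V : SrcEx2 → Language Bool) (w : List Bool) :
    w ∈ langSubst V LsEx2 ↔ ∃ u ∈ V .a1, ∃ v ∈ V .a2, u ++ v = w := by
  have h : langSubst V LsEx2 = V .a1 * V .a2 := by
    have h' : langSubst V LsEx2 = subst V [Sum.inl .a1, Sum.inl .a2] :=
      Set.biUnion_singleton _ _
    rw [h']
    simp [subst, viewHat]
  rw [h, Language.mem_mul]

theorem mem_LtEx2 (w : List Bool) :
    w ∈ LtEx2 ↔ w = [false, false] ∨ w = [false, true] ∨ w = [true, false] := Iff.rfl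

theorem captures_iff (V : SrcEx2 → Language Bool) :
    Captures V LsEx2 LtEx2 ↔
      (∀ u ∈ V .a1, ∀ v ∈ V .a2, u ++ v ∈ LtEx2) ∧ (∃ u, u ∈ V .a1) ∧ ∃ v, v ∈ V .a2 := by
  constructor
  · rintro ⟨hle, hne⟩
    refine ⟨fun u hu v hv => hle ((mem_langSubst_LsEx2 V _).2 ⟨u, hu, v, hv, rfl⟩), ?_⟩
    obtain ⟨w, hw⟩ := Set.nonempty_iff_ne_empty.2 hne
    obtain ⟨u, hu, v, hv, -⟩ := (mem_langSubst_LsEx2 V w).1 hw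
    exact ⟨⟨u, hu⟩, ⟨v, hv⟩⟩
  · rintro ⟨h, ⟨u, hu⟩, ⟨v, hv⟩⟩
    refine ⟨fun w hw => ?_, fun h0 => ?_⟩
    · obtain ⟨u, hu, v, hv, rfl⟩ := (mem_langSubst_LsEx2 V w).1 hw
      exact h u hu v hv
    · have hmem := (mem_langSubst_LsEx2 V _).2 ⟨u, hu, v, hv, rfl⟩
      rw [h0] at hmem
      exact Language.notMem_zero _ hmem

theorem mem_V1Ex_a1 (w : List Bool) : w ∈ V1Ex .a1 ↔ w = [false] := Iff.rfl

theorem mem_V1Ex_a2 (w : List Bool) : w ∈ V1Ex .a2 ↔ w = [false] ∨ w = [true] := Iff.rfl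

theorem mem_V2Ex_a1 (w : List Bool) : w ∈ V2Ex .a1 ↔ w = [false] ∨ w = [true] := Iff.rfl

theorem mem_V2Ex_a2 (w : List Bool) : w ∈ V2Ex .a2 ↔ w = [false] := Iff.rfl

theorem eq_of_append_false_mem {u : List Bool} (h : u ++ [false] ∈ LtEx2) :
    u = [false] ∨ u = [true] := by
  rcases u with _ | ⟨x, _ | ⟨y, _ | ⟨z, u⟩⟩⟩ <;> simp_all [mem_LtEx2]

theorem eq_of_append_true_mem {u : List Bool} (h : u ++ [true] ∈ LtEx2) : u = [false] := by
  rcases u with _ | ⟨x, _ | ⟨y, _ | ⟨z, u⟩⟩⟩ <;> simp_all [mem_LtEx2]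

theorem eq_of_false_append_mem {v : List Bool} (h : [false] ++ v ∈ LtEx2) :
    v = [false] ∨ v = [true] := by
  simpa [mem_LtEx2] using h

theorem eq_of_true_append_mem {v : List Bool} (h : [true] ++ v ∈ LtEx2) : v = [false] := by
  simpa [mem_LtEx2] using h

theorem maximallyCaptures_V1Ex : MaximallyCaptures V1Ex LsEx2 LtEx2 := by
  refine ⟨(captures_iff _).2 ⟨?_, ⟨_, rfl⟩, ⟨_, Or.inl rfl⟩⟩, ?_⟩
  · rintro u rfl v (rfl | rfl) <;> simp [mem_LtEx2]
  · rintro ⟨V', hV', hle, a, hne⟩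
    have hcap := ((captures_iff V').1 hV').1
    have h1 : [false] ∈ V' .a1 := hle .a1 ((mem_V1Ex_a1 _).2 rfl)
    have h2 : [true] ∈ V' .a2 := hle .a2 ((mem_V1Ex_a2 _).2 (Or.inr rfl))
    refine hne (le_antisymm (hle a) fun w hw => ?_)
    cases a with
    | a1 => exact (mem_V1Ex_a1 w).2 (eq_of_append_true_mem (hcap w hw _ h2))
    | a2 => exact (mem_V1Ex_a2 w).2 (eq_of_false_append_mem (hcap _ h1 w hw))

theorem maximallyCaptures_V2Ex : MaximallyCaptures V2Ex LsEx2 LtEx2 := by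
  refine ⟨(captures_iff _).2 ⟨?_, ⟨_, Or.inl rfl⟩, ⟨_, rfl⟩⟩, ?_⟩
  · rintro u (rfl | rfl) v rfl <;> simp [mem_LtEx2]
  · rintro ⟨V', hV', hle, a, hne⟩
    have hcap := ((captures_iff V').1 hV').1
    have h1 : [true] ∈ V' .a1 := hle .a1 ((mem_V2Ex_a1 _).2 (Or.inr rfl))
    have h2 : [false] ∈ V' .a2 := hle .a2 ((mem_V2Ex_a2 _).2 rfl)
    refine hne (le_antisymm (hle a) fun w hw => ?_)
    cases a with
    | a1 => exact (mem_V2Ex_a1 w).2 (eq_of_append_false_mem (hcap w hw _ h2))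
    | a2 => exact (mem_V2Ex_a2 w).2 (eq_of_true_append_mem (hcap _ h1 w hw))

/-- Capturing views are not closed under union (second example of Section 6): both `V₁`
and `V₂` maximally capture `⟨a₁·a₂, 00 + 01 + 10⟩`, but their pointwise union does not
capture the mapping, since it yields the word `11`, which is not in the target language. -/
theorem capturing_not_closed_under_union :
    MaximallyCaptures V1Ex LsEx2 LtEx2 ∧
    MaximallyCaptures V2Ex LsEx2 LtEx2 ∧
    ¬ Captures (fun a => V1Ex a + V2Ex a) LsEx2 LtEx2 ∧
    [true, true] ∈ langSubst (fun a => V1Ex a + V2Ex a) LsEx2 ∧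
    [true, true] ∉ LtEx2 := by
  have hmem : [true, true] ∈ langSubst (fun a => V1Ex a + V2Ex a) LsEx2 :=
    (mem_langSubst_LsEx2 _ _).2
      ⟨[true], Or.inr ((mem_V2Ex_a1 _).2 (Or.inr rfl)),
        [true], Or.inl ((mem_V1Ex_a2 _).2 (Or.inr rfl)), rfl⟩
  have hnot : [true, true] ∉ LtEx2 := by simp [mem_LtEx2]
  exact ⟨maximallyCaptures_V1Ex, maximallyCaptures_V2Ex, fun h => hnot (h.1 hmem), hmem, hnot⟩
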